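/- arXiv:math/0008142 — 2 statements merged into one kernel-verified Lean document; each statement's English description precedes it below -/
import Mathlib

section
/- Let K be a division ring and R = K[t]. A monic quadratic polynomial f ∈ R is a Wedderburn polynomial if and only if there exist a ≠ b in K such that f = (t − (b−a)·b·(b−a)⁻¹)·(t − a). -/
/-!
The proof rests on two facts about right-hand factors over a division ring `K`.

* Remainder theorem: `g = q * (X - C a) + C (g.eval a)` for some `q`, so `a` is a root of `g`
  exactly when `X - C a` is a right factor of `g`.
* Product formula: if `e = p.eval x` is nonzero, then
  `(q * p).eval x = q.eval (e * x * e⁻¹) * e`, and `(q * p).eval x = 0` if `e = 0`.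

By the two together, for `a ≠ b` a polynomial vanishes at both `a` and `b` if and only if it is a
left multiple of `(X - C ((b - a) * b * (b - a)⁻¹)) * (X - C a)`. This gives the backward direction.
Conversely, the zero set of a quadratic W-polynomial `f` contains two distinct points: otherwise
some `X - C a` would vanish on it and hence be a left multiple of `f`, against the degrees. So `f`
is a left multiple of the quadratic above, and both are monic of degree two.
-/

open Polynomial

/-- The zero set `V(f) = {a ∈ K : f(a) = 0}`. -/
def zeroSet {K : Type*} [DivisionRing K] (f : K[X]) : Set K := {a : K | f.eval a = 0}

/-- `f` is the minimal polynomial of `Δ`: the monic generator of the left ideal of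
polynomials vanishing on `Δ`. -/
def IsMinPolyOf {K : Type*} [DivisionRing K] (Δ : Set K) (f : K[X]) : Prop :=
  f.Monic ∧ ∀ g : K[X], (∀ a ∈ Δ, g.eval a = 0) ↔ ∃ q : K[X], g = q * f

/-- `f` is a Wedderburn polynomial: the minimal polynomial of its own zero set. -/
def IsWPoly {K : Type*} [DivisionRing K] (f : K[X]) : Prop :=
  IsMinPolyOf (zeroSet f) f

/-- Product formula, in a form that covers both the case `p.eval x = 0` (any `c` works) and the
case `p.eval x ≠ 0` (where `c` is the conjugate of `x` by `p.eval x`). -/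
theorem eval_mul_of_semiconj {K : Type*} [DivisionRing K] (q p : K[X]) {x c : K}
    (h : SemiconjBy (p.eval x) x c) : (q * p).eval x = q.eval c * p.eval x := by
  induction q using Polynomial.induction_on' with
  | add q₁ q₂ h₁ h₂ => simp [add_mul, h₁, h₂]
  | monomial n r =>
    -- Powers of `X` are central, so `X ^ n` can be moved to the right of `p` before evaluating.
    rw [← C_mul_X_pow_eq_monomial, mul_assoc, X_pow_mul, eval_C_mul, eval_mul_X_pow,
      (h.pow_right n).eq, eval_C_mul, eval_X_pow, mul_assoc]

theorem eval_mul_eq_zero_of_right {K : Type*} [DivisionRing K] (q p : K[X]) {x : K}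
    (h : p.eval x = 0) : (q * p).eval x = 0 := by
  rw [eval_mul_of_semiconj q p (c := 0) (by simp [SemiconjBy, h]), h, mul_zero]

theorem eval_mul_X_sub_C_of_ne {K : Type*} [DivisionRing K] (q : K[X]) {a b : K} (hab : a ≠ b) :
    (q * (X - C a)).eval b = q.eval ((b - a) * b * (b - a)⁻¹) * (b - a) := by
  have hd : b - a ≠ 0 := sub_ne_zero.2 hab.symm
  have h := eval_mul_of_semiconj q (X - C a) (x := b) (c := (b - a) * b * (b - a)⁻¹)
    (by simp [SemiconjBy, mul_assoc, hd])
  simpa using h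

/-- Remainder theorem for division by `X - C a` on the right. -/
theorem exists_eq_mul_X_sub_C_add {K : Type*} [DivisionRing K] (g : K[X]) (a : K) :
    ∃ q : K[X], g = q * (X - C a) + C (g.eval a) := by
  induction g using Polynomial.induction_on' with
  | add g₁ g₂ h₁ h₂ =>
    obtain ⟨q₁, h₁⟩ := h₁
    obtain ⟨q₂, h₂⟩ := h₂
    refine ⟨q₁ + q₂, ?_⟩
    rw [eval_add, C_add, add_mul]
    nth_rewrite 1 [h₁, h₂]
    abel
  | monomial n r =>
    have hc : Commute (X : K[X]) (C a) := commute_X (C a)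
    refine ⟨C r * ∑ i ∈ Finset.range n, X ^ i * C a ^ (n - 1 - i), ?_⟩
    rw [mul_assoc, hc.geom_sum₂_mul, ← C_mul_X_pow_eq_monomial, eval_C_mul, eval_X_pow,
      C_mul, C_pow, mul_sub, sub_add_cancel]

theorem exists_eq_mul_X_sub_C {K : Type*} [DivisionRing K] {g : K[X]} {a : K}
    (h : g.eval a = 0) : ∃ q : K[X], g = q * (X - C a) := by
  simpa [h] using exists_eq_mul_X_sub_C_add g a

theorem exists_eq_mul_of_two_roots {K : Type*} [DivisionRing K] {g : K[X]} {a b : K}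
    (hab : a ≠ b) (ha : g.eval a = 0) (hb : g.eval b = 0) :
    ∃ q : K[X], g = q * ((X - C ((b - a) * b * (b - a)⁻¹)) * (X - C a)) := by
  obtain ⟨q, rfl⟩ := exists_eq_mul_X_sub_C ha
  rw [eval_mul_X_sub_C_of_ne q hab] at hb
  obtain ⟨q', rfl⟩ := exists_eq_mul_X_sub_C
    ((mul_eq_zero.1 hb).resolve_right (sub_ne_zero.2 hab.symm))
  exact ⟨q', mul_assoc _ _ _⟩

/-- A monic quadratic `f` is a W-polynomial iff
`f = (t − (b−a)·b·(b−a)⁻¹)(t − a)` for some `a ≠ b` in `K`. -/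
theorem stmt4 {K : Type*} [DivisionRing K] (f : K[X]) (hmonic : f.Monic)
    (hdeg : f.natDegree = 2) :
    IsWPoly f ↔ ∃ a b : K, a ≠ b ∧
      f = (X - C ((b - a) * b * (b - a)⁻¹)) * (X - C a) := by
  constructor
  · rintro ⟨-, hf⟩
    -- `X - C a` is not a left multiple of `f`, so some root of `f` differs from `a`.
    have key : ∀ a : K, ∃ b ∈ zeroSet f, a ≠ b := by
      intro a
      by_contra! hcon
      obtain ⟨q, hq⟩ := (hf (X - C a)).1 fun b hb => by simp [← hcon b hb]
      have hq0 : q ≠ 0 := by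
        rintro rfl
        exact X_sub_C_ne_zero a (by simpa using hq)
      have hdeg' := congrArg natDegree hq
      rw [natDegree_X_sub_C, natDegree_mul hq0 hmonic.ne_zero, hdeg] at hdeg'
      omega
    obtain ⟨a, ha, -⟩ := key 0
    obtain ⟨b, hb, hab⟩ := key a
    refine ⟨a, b, hab, ?_⟩
    obtain ⟨q, hq⟩ := exists_eq_mul_of_two_roots hab ha hb
    set p : K[X] := (X - C ((b - a) * b * (b - a)⁻¹)) * (X - C a) with hp
    have hpm : p.Monic := (monic_X_sub_C _).mul (monic_X_sub_C _)
    have hpd : p.natDegree = 2 := by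
      rw [hp, (monic_X_sub_C _).natDegree_mul (monic_X_sub_C _), natDegree_X_sub_C,
        natDegree_X_sub_C]
    have hqm : q.Monic := hpm.of_mul_monic_right (hq ▸ hmonic)
    have hqd : q.natDegree = 0 := by
      have h := congrArg natDegree hq
      rw [hqm.natDegree_mul hpm, hdeg, hpd] at h
      omega
    rw [hq, hqm.natDegree_eq_zero.1 hqd, one_mul]
  · rintro ⟨a, b, hab, rfl⟩
    refine ⟨hmonic, fun g => ⟨fun hg => ?_, ?_⟩⟩
    · refine exists_eq_mul_of_two_roots hab (hg a ?_) (hg b ?_)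
      · exact eval_mul_eq_zero_of_right _ _ (by simp)
      · show eval b _ = 0
        rw [eval_mul_X_sub_C_of_ne _ hab, eval_sub, eval_X, eval_C, sub_self, zero_mul]
    · rintro ⟨q, rfl⟩ x hx
      exact eval_mul_eq_zero_of_right _ _ hx
end

section
/- (First Rank Theorem) Let K be a division ring and R = K[t]. For any two algebraic sets Δ, Γ ⊆ K, one has rk(Δ) + rk(Γ) = rk(Δ ∪ Γ) + rk(Δ̄ ∩ Γ̄), where Δ̄ and Γ̄ are the P-closures of Δ and Γ. In particular, rk(Δ ∪ Γ) = rk(Δ) + rk(Γ) if and only if Δ̄ ∩ Γ̄ = ∅. -/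
/-!
Write `R = K[X]`. The polynomials vanishing on `Δ ∪ Γ` form `R fΔ ∩ R fΓ`, so this is `R fU`. The
heart of the matter is the identity `R fΔ + R fΓ = R fI`, after which a dimension count over `K`
in the space of polynomials of degree less than `deg fU` gives the rank formula.

The identity says that the left ideal `I = R fΔ + R fΓ` consists of all polynomials vanishing on
its zero set. This holds for every left ideal `I` containing a minimal polynomial `f = fΔ`
(`exists_eval_ne_zero_of_notMem`). There is a `j` with `I + R j = R` and `I ∩ R j ⊆ R f`
(`exists_complement`): among the `j` with `f ∈ R j` and `I + R j = R`, one of maximal degree works.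
Write `1 = i₀ + j₀` with `i₀ ∈ I`, `j₀ ∈ R j`. Then `I j₀ ⊆ I ∩ R j ⊆ R f`, whereas `r ∉ I` forces
`r j₀ ∉ I`, so `(r j₀)(a) ≠ 0` for some `a ∈ Δ`. By the product formula
`(g h)(a) = g(h(a) a h(a)⁻¹) h(a)`, the conjugate `b = j₀(a) a j₀(a)⁻¹` is a zero of all of `I` but
not of `r`.
-/

open Polynomial

/-- `Δ` is an algebraic subset of `K`: some nonzero polynomial vanishes on it. -/
def IsAlgebraicSet {K : Type*} [DivisionRing K] (Δ : Set K) : Prop :=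
  ∃ f : K[X], f ≠ 0 ∧ ∀ a ∈ Δ, f.eval a = 0

section Auxiliary

variable {K : Type*} [DivisionRing K]

lemma eval_mul_eq_sum (g h : K[X]) (a : K) :
    (g * h).eval a = g.sum fun i c => c * h.eval a * a ^ i := by
  induction g using Polynomial.induction_on' with
  | add p q hp hq =>
    rw [add_mul, eval_add, hp, hq,
      Polynomial.sum_add_index p q (fun i c => c * h.eval a * a ^ i) (by simp)
        (by intros; simp [add_mul])]
  | monomial n c =>
    rw [Polynomial.sum_monomial_index c (fun i c => c * h.eval a * a ^ i) (by simp),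
      ← C_mul_X_pow_eq_monomial, mul_assoc, X_pow_mul, eval_C_mul, eval_mul_X_pow, mul_assoc]

lemma eval_mul_of_eval_eq_zero (g : K[X]) {h : K[X]} {a : K} (ha : h.eval a = 0) :
    (g * h).eval a = 0 := by
  simp [eval_mul_eq_sum, ha, Polynomial.sum]

/-- The product formula for evaluation over a division ring. -/
lemma eval_mul_conj (g : K[X]) {h : K[X]} {a : K} (ha : h.eval a ≠ 0) :
    (g * h).eval a = g.eval (h.eval a * a * (h.eval a)⁻¹) * h.eval a := by
  rw [eval_mul_eq_sum, eval_eq_sum (p := g), Polynomial.sum, Polynomial.sum, Finset.sum_mul]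
  refine Finset.sum_congr rfl fun i _ => ?_
  have hpow : ∀ n : ℕ, (h.eval a * a * (h.eval a)⁻¹) ^ n = h.eval a * a ^ n * (h.eval a)⁻¹ := by
    intro n
    induction n with
    | zero => simp [ha]
    | succ n ih =>
      rw [pow_succ, ih, pow_succ]
      simp only [mul_assoc, inv_mul_cancel_left₀ ha]
  rw [hpow]
  simp only [mul_assoc, inv_mul_cancel₀ ha, mul_one]

/-- Division with the divisor as a right factor; Mathlib's `divByMonic` puts it on the left. -/
lemma exists_right_div {f : K[X]} (hf : f.Monic) (p : K[X]) :
    ∃ q s : K[X], p = q * f + s ∧ s.degree < f.degree := by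
  induction hd : p.degree using WellFoundedLT.induction generalizing p with
  | ind d ih =>
    subst hd
    by_cases hlt : p.degree < f.degree
    · exact ⟨0, p, by simp, hlt⟩
    · push Not at hlt
      have hp : p ≠ 0 := by
        rintro rfl
        rw [degree_zero, le_bot_iff, degree_eq_bot] at hlt
        exact hf.ne_zero hlt
      set m : K[X] := C p.leadingCoeff * X ^ (p.natDegree - f.natDegree) with hm
      have hlc : p.leadingCoeff ≠ 0 := leadingCoeff_ne_zero.mpr hp
      have hdeg : (m * f).degree = p.degree := by
        rw [hm, degree_mul, degree_C_mul_X_pow _ hlc, degree_eq_natDegree hp,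
          degree_eq_natDegree hf.ne_zero, ← Nat.cast_add,
          Nat.sub_add_cancel (natDegree_le_natDegree hlt)]
      have hlead : p.leadingCoeff = (m * f).leadingCoeff := by
        rw [leadingCoeff_mul, hf.leadingCoeff, hm, mul_one, leadingCoeff_C_mul_X_pow]
      obtain ⟨q, s, hqs, hs⟩ := ih _ (degree_sub_lt_left hdeg.symm hp hlead) (p - m * f) rfl
      exact ⟨m + q, s, by rw [add_mul, add_assoc, ← hqs]; abel, hs⟩

lemma exists_eq_mul_X_sub_C_add_s13 (u : K[X]) (c : K) :
    ∃ v : K[X], u = v * (X - C c) + C (u.eval c) := by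
  obtain ⟨v, s, hvs, hs⟩ := exists_right_div (monic_X_sub_C c) u
  rw [degree_X_sub_C] at hs
  have hs' := eq_C_of_degree_le_zero (Nat.WithBot.lt_one_iff_le_zero.mp hs)
  refine ⟨v, ?_⟩
  have h0 : (v * (X - C c)).eval c = 0 := eval_mul_of_eval_eq_zero v (by simp)
  have : u.eval c = s.coeff 0 := by
    rw [hvs, eval_add, h0, hs']; simp
  rw [this, ← hs']
  exact hvs

/-- If `f` is a minimal polynomial, then for every left ideal `I` there is a `j` with `I + R j = R`
and `I ∩ R j ⊆ R f`. -/
lemma exists_complement {Δ : Set K} {f : K[X]} (hf : IsMinPolyOf Δ f) (I : Ideal K[X]) :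
    ∃ j : K[X], (∃ v : K[X], 1 - v * j ∈ I) ∧
      ∀ u : K[X], u * j ∈ I → ∀ a ∈ Δ, (u * j).eval a = 0 := by
  classical
  have hf0 := hf.1.ne_zero
  let P : ℕ → Prop := fun n =>
    ∃ j : K[X], j.natDegree = n ∧ (∃ q, f = q * j) ∧ ∃ v : K[X], 1 - v * j ∈ I
  have hbound : ∀ n, P n → n ≤ f.natDegree := by
    rintro n ⟨j, rfl, ⟨q, hq⟩, -⟩
    have hq0 : q ≠ 0 := by rintro rfl; simp [hf0] at hq
    have hj0 : j ≠ 0 := by rintro rfl; simp [hf0] at hq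
    rw [hq, natDegree_mul hq0 hj0]
    omega
  have hP0 : P 0 := ⟨1, by simp, ⟨f, by simp⟩, 1, by simp⟩
  have hmax := Nat.findGreatest_spec (P := P) (Nat.zero_le f.natDegree) hP0
  have hgt : ∀ n, P n → n ≤ Nat.findGreatest P f.natDegree :=
    fun n hn => Nat.le_findGreatest (hbound n hn) hn
  obtain ⟨j, hjdeg, ⟨q, hq⟩, v, hv⟩ := hmax
  refine ⟨j, ⟨v, hv⟩, ?_⟩
  intro u hu a ha
  by_contra hne
  have hj0 : j ≠ 0 := by rintro rfl; simp [hf0] at hq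
  have hja : j.eval a ≠ 0 := fun h => hne (eval_mul_of_eval_eq_zero u h)
  -- With `c` the conjugate of `a` by `j a`, the polynomial `(X - c) j` generates the polynomials
  -- in `R j` vanishing at `a`; it satisfies the same conditions as `j` and has larger degree.
  set c := j.eval a * a * (j.eval a)⁻¹ with hc
  have hfa : f.eval a = 0 := (hf.2 f).mpr ⟨1, by simp⟩ a ha
  have hqc : q.eval c = 0 := by
    rw [hq, eval_mul_conj q hja] at hfa
    exact (mul_eq_zero.mp hfa).resolve_right hja
  have huc : u.eval c ≠ 0 := by
    intro h
    rw [eval_mul_conj u hja, ← hc, h, zero_mul] at hne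
    exact hne rfl
  obtain ⟨q', hq'⟩ := exists_eq_mul_X_sub_C_add_s13 q c
  obtain ⟨w, hw⟩ := exists_eq_mul_X_sub_C_add_s13 u c
  rw [hqc, C_0, add_zero] at hq'
  have hP : P (j.natDegree + 1) := by
    refine ⟨(X - C c) * j, ?_, ⟨q', ?_⟩, -(v * C (u.eval c)⁻¹ * w), ?_⟩
    · rw [natDegree_mul (X_sub_C_ne_zero c) hj0, natDegree_X_sub_C, add_comm]
    · rw [← mul_assoc, ← hq', ← hq]
    · have h1 : v * C (u.eval c)⁻¹ * (u * j) ∈ I := I.mul_mem_left _ hu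
      have h2 : v * C (u.eval c)⁻¹ * (u * j)
          = v * C (u.eval c)⁻¹ * w * ((X - C c) * j) + v * j := by
        have h3 : u * j = w * ((X - C c) * j) + C (u.eval c) * j := by
          conv_lhs => rw [hw]
          rw [add_mul, mul_assoc]
        have h4 : C (u.eval c)⁻¹ * (C (u.eval c) * j) = j := by
          rw [← mul_assoc, ← C_mul, inv_mul_cancel₀ huc, C_1, one_mul]
        rw [h3, mul_add, mul_assoc v _ (C _ * j), h4]
        simp only [mul_assoc]
      have h5 := I.add_mem hv h1
      rw [h2] at h5
      convert h5 using 1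
      rw [neg_mul]
      abel
  have := hgt _ hP
  omega

/-- A left ideal containing a minimal polynomial is determined by its zero set. -/
lemma exists_eval_ne_zero_of_notMem {Δ : Set K} {f : K[X]} (hf : IsMinPolyOf Δ f)
    (I : Ideal K[X]) (hfI : f ∈ I) {r : K[X]} (hr : r ∉ I) :
    ∃ b : K, (∀ g ∈ I, g.eval b = 0) ∧ r.eval b ≠ 0 := by
  obtain ⟨j, ⟨v, hv⟩, hj⟩ := exists_complement hf I
  have hsub : ∀ s : K[X], s - s * (v * j) ∈ I := by
    intro s
    have := I.mul_mem_left s hv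
    rwa [mul_sub, mul_one] at this
  have hrj : ∃ a ∈ Δ, (r * (v * j)).eval a ≠ 0 := by
    by_contra! h
    obtain ⟨q, hq⟩ := (hf.2 _).mp h
    have h1 : r * (v * j) ∈ I := hq ▸ I.mul_mem_left q hfI
    exact hr (by simpa using I.add_mem (hsub r) h1)
  obtain ⟨a, ha, hne⟩ := hrj
  have hva : (v * j).eval a ≠ 0 := fun h => hne (eval_mul_of_eval_eq_zero r h)
  refine ⟨(v * j).eval a * a * ((v * j).eval a)⁻¹, fun g hg => ?_, fun h => ?_⟩
  · have h1 : g * v * j ∈ I := by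
      have := I.sub_mem hg (hsub g)
      rwa [sub_sub_cancel, ← mul_assoc] at this
    have h2 := hj _ h1 a ha
    rw [mul_assoc, eval_mul_conj g hva] at h2
    exact (mul_eq_zero.mp h2).resolve_right hva
  · rw [eval_mul_conj r hva, h, zero_mul] at hne
    exact hne rfl

/-- Right multiplication by `f`, as a map of left `K`-vector spaces. -/
noncomputable def mulRightLin (f : K[X]) : K[X] →ₗ[K] K[X] where
  toFun p := p * f
  map_add' p q := add_mul p q f
  map_smul' c p := smul_mul_assoc c p f

/-- The polynomials of degree less than `n + deg f` that are left multiples of `f`. -/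
noncomputable def multiplesLT (f : K[X]) (n : ℕ) : Submodule K K[X] :=
  (degreeLT K n).map (mulRightLin f)

lemma mem_multiplesLT {f : K[X]} (hf : f ≠ 0) {n : ℕ} {p : K[X]} :
    p ∈ multiplesLT f n ↔ ∃ q, p = q * f ∧ p.degree < (n + f.natDegree : ℕ) := by
  have key : ∀ q : K[X], (q * f).degree < (n + f.natDegree : ℕ) ↔ q.degree < n := by
    intro q
    rcases eq_or_ne q 0 with rfl | hq
    · simp
    · rw [degree_eq_natDegree (mul_ne_zero hq hf), degree_eq_natDegree hq, natDegree_mul hq hf,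
        Nat.cast_lt, Nat.cast_lt]
      omega
  constructor
  · rintro ⟨q, hq, rfl⟩
    exact ⟨q, rfl, (key q).mpr (mem_degreeLT.mp hq)⟩
  · rintro ⟨q, rfl, hq⟩
    exact ⟨q, mem_degreeLT.mpr ((key q).mp hq), rfl⟩

instance (n : ℕ) : Module.Finite K (degreeLT K n) :=
  Module.Finite.equiv (degreeLTEquiv K n).symm

instance (f : K[X]) (n : ℕ) : Module.Finite K (multiplesLT f n) :=
  inferInstanceAs (Module.Finite K ((degreeLT K n).map (mulRightLin f)))

lemma finrank_multiplesLT {f : K[X]} (hf : f ≠ 0) (n : ℕ) :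
    Module.finrank K (multiplesLT f n) = n := by
  have hinj : Function.Injective (mulRightLin f) := fun p q h => mul_right_cancel₀ hf h
  rw [multiplesLT, ← (Submodule.equivMapOfInjective _ hinj _).finrank_eq,
    (degreeLTEquiv K n).finrank_eq, Module.finrank_fin_fun]

/-- The degree formula for a least left common multiple `u` and a greatest right common divisor
`d` of `f` and `g`. In degrees less than `deg u`, the multiples of `f` and of `g` are complementary
in the multiples of `d`. -/
lemma natDegree_add_natDegree_eq {f g u d : K[X]} (hf : f.Monic) (hg : g.Monic) (hu : u.Monic)
    (hd : d.Monic) (huf : ∃ q, u = q * f) (hug : ∃ q, u = q * g)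
    (hmin : ∀ p q : K[X], p * f = q * g → ∃ r, p * f = r * u)
    (hdf : ∃ q, f = q * d) (hdg : ∃ q, g = q * d) (hbez : ∃ p q, d = p * f + q * g) :
    f.natDegree + g.natDegree = u.natDegree + d.natDegree := by
  obtain ⟨bf, hbf⟩ := huf
  obtain ⟨bg, hbg⟩ := hug
  obtain ⟨cf, hcf⟩ := hdf
  obtain ⟨cg, hcg⟩ := hdg
  obtain ⟨p, q, hpq⟩ := hbez
  have hle : ∀ {x y z : K[X]}, x.Monic → x = y * z → z.natDegree ≤ x.natDegree := by
    rintro x y z hx rfl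
    have hne := mul_ne_zero_iff.mp hx.ne_zero
    rw [natDegree_mul hne.1 hne.2]
    omega
  have hfu := hle hu hbf
  have hgu := hle hu hbg
  have hdf' := hle hf hcf
  have mem : ∀ {x : K[X]}, x.Monic → x.natDegree ≤ u.natDegree → ∀ y : K[X],
      y ∈ multiplesLT x (u.natDegree - x.natDegree) ↔ ∃ q, y = q * x ∧ y.degree < u.degree := by
    intro x hx hxu y
    rw [mem_multiplesLT hx.ne_zero, Nat.sub_add_cancel hxu, degree_eq_natDegree hu.ne_zero]
  have hinf : multiplesLT f (u.natDegree - f.natDegree) ⊓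
      multiplesLT g (u.natDegree - g.natDegree) = ⊥ := by
    rw [eq_bot_iff]
    rintro y ⟨hy1, hy2⟩
    obtain ⟨s, rfl, hs⟩ := (mem hf hfu _).mp hy1
    obtain ⟨t, ht, -⟩ := (mem hg hgu _).mp hy2
    obtain ⟨r, hr⟩ := hmin s t ht
    rw [Submodule.mem_bot]
    by_contra hne
    rw [hr] at hne hs
    have hrn : r ≠ 0 := left_ne_zero_of_mul hne
    rw [degree_eq_natDegree hne, natDegree_mul hrn hu.ne_zero, degree_eq_natDegree hu.ne_zero,
      Nat.cast_lt] at hs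
    omega
  have hsup : multiplesLT f (u.natDegree - f.natDegree) ⊔
      multiplesLT g (u.natDegree - g.natDegree) = multiplesLT d (u.natDegree - d.natDegree) := by
    apply le_antisymm
    · apply sup_le
      · intro y hy
        obtain ⟨s, hs, hlt⟩ := (mem hf hfu _).mp hy
        exact (mem hd (by omega) _).mpr ⟨s * cf, by rw [mul_assoc, ← hcf, hs], hlt⟩
      · intro y hy
        obtain ⟨s, hs, hlt⟩ := (mem hg hgu _).mp hy
        exact (mem hd (by omega) _).mpr ⟨s * cg, by rw [mul_assoc, ← hcg, hs], hlt⟩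
    · intro y hy
      obtain ⟨r, hr, hlt⟩ := (mem hd (by omega) _).mp hy
      -- Reducing `r p` modulo `bf` moves multiples of `u = bf f = bg g` into the second summand.
      have hbfm : bf.Monic := by
        have := hu.leadingCoeff
        rwa [hbf, leadingCoeff_mul, hf.leadingCoeff, mul_one] at this
      obtain ⟨t, s, hts, hs⟩ := exists_right_div hbfm (r * p)
      have hsf : (s * f).degree < u.degree := by
        rcases eq_or_ne s 0 with rfl | hs0
        · rw [zero_mul, degree_zero, bot_lt_iff_ne_bot, Ne, degree_eq_bot]
          exact hu.ne_zero
        rw [degree_eq_natDegree hs0, degree_eq_natDegree hbfm.ne_zero, Nat.cast_lt] at hs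
        rw [degree_eq_natDegree (mul_ne_zero hs0 hf.ne_zero), degree_eq_natDegree hu.ne_zero,
          natDegree_mul hs0 hf.ne_zero, hbf, natDegree_mul hbfm.ne_zero hf.ne_zero, Nat.cast_lt]
        omega
      have hy' : y = s * f + (t * bg + r * q) * g := by
        rw [hr, hpq, mul_add, ← mul_assoc, hts, add_mul, add_mul, mul_assoc t, ← hbf, mul_assoc t,
          ← hbg, ← mul_assoc]
        abel
      rw [Submodule.mem_sup]
      refine ⟨s * f, (mem hf hfu _).mpr ⟨s, rfl, hsf⟩, (t * bg + r * q) * g,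
        (mem hg hgu _).mpr ⟨_, rfl, ?_⟩, hy'.symm⟩
      have h1 : (t * bg + r * q) * g = y - s * f := by rw [hy']; abel
      rw [h1]
      exact (degree_sub_le _ _).trans_lt (max_lt hlt hsf)
  have hdim := Submodule.finrank_sup_add_finrank_inf_eq
    (multiplesLT f (u.natDegree - f.natDegree)) (multiplesLT g (u.natDegree - g.natDegree))
  rw [hinf, hsup, finrank_bot, finrank_multiplesLT hf.ne_zero, finrank_multiplesLT hg.ne_zero,
    finrank_multiplesLT hd.ne_zero] at hdim
  omega

end Auxiliary

/-- **First Rank Theorem.** `rk Δ + rk Γ = rk (Δ ∪ Γ) + rk (Δ̄ ∩ Γ̄)`; in particular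
`rk (Δ ∪ Γ) = rk Δ + rk Γ` iff `Δ̄ ∩ Γ̄ = ∅`. -/
theorem stmt13 {K : Type*} [DivisionRing K] (Δ Γ : Set K)
    (hΔ : IsAlgebraicSet Δ) (hΓ : IsAlgebraicSet Γ)
    (fΔ fΓ fU fI : K[X])
    (hfΔ : IsMinPolyOf Δ fΔ) (hfΓ : IsMinPolyOf Γ fΓ)
    (hfU : IsMinPolyOf (Δ ∪ Γ) fU)
    (hfI : IsMinPolyOf (zeroSet fΔ ∩ zeroSet fΓ) fI) :
    fΔ.natDegree + fΓ.natDegree = fU.natDegree + fI.natDegree ∧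
    (fU.natDegree = fΔ.natDegree + fΓ.natDegree ↔
      zeroSet fΔ ∩ zeroSet fΓ = ∅) := by
  have self : ∀ {Λ : Set K} {f : K[X]}, IsMinPolyOf Λ f → ∀ a ∈ Λ, f.eval a = 0 :=
    fun {_ f} h => (h.2 f).mpr ⟨1, by simp⟩
  have hrank : fΔ.natDegree + fΓ.natDegree = fU.natDegree + fI.natDegree := by
    refine natDegree_add_natDegree_eq hfΔ.1 hfΓ.1 hfU.1 hfI.1
      ((hfΔ.2 _).mp fun a ha => self hfU a (Or.inl ha))
      ((hfΓ.2 _).mp fun a ha => self hfU a (Or.inr ha)) ?_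
      ((hfI.2 _).mp fun a ha => ha.1) ((hfI.2 _).mp fun a ha => ha.2) ?_
    · intro p q h
      refine (hfU.2 _).mp ?_
      rintro a (ha | ha)
      · exact eval_mul_of_eval_eq_zero p (self hfΔ a ha)
      · rw [h]
        exact eval_mul_of_eval_eq_zero q (self hfΓ a ha)
    · have hmem : fI ∈ Ideal.span {fΔ, fΓ} := by
        by_contra hnot
        obtain ⟨b, hb, hne⟩ := exists_eval_ne_zero_of_notMem hfΔ (Ideal.span {fΔ, fΓ})
          (Ideal.subset_span (by simp)) hnot
        exact hne (self hfI b ⟨hb _ (Ideal.subset_span (by simp)),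
          hb _ (Ideal.subset_span (by simp))⟩)
      obtain ⟨p, q, hpq⟩ := Submodule.mem_span_pair.mp hmem
      exact ⟨p, q, hpq.symm⟩
  refine ⟨hrank, ?_⟩
  have hiff : fI.natDegree = 0 ↔ zeroSet fΔ ∩ zeroSet fΓ = ∅ := by
    constructor
    · intro h
      rw [Set.eq_empty_iff_forall_notMem]
      intro a ha
      have h0 := self hfI a ha
      rw [hfI.1.natDegree_eq_zero.mp h] at h0
      simp at h0
    · intro h
      -- On the empty set the constant `1` vanishes, so `1` is a multiple of `fI`.
      obtain ⟨q, hq⟩ := (hfI.2 1).mp (by simp [h])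
      have hne : q * fI ≠ 0 := hq ▸ one_ne_zero
      have hdeg := congrArg natDegree hq
      rw [natDegree_one, natDegree_mul (left_ne_zero_of_mul hne) hfI.1.ne_zero] at hdeg
      omega
  rw [← hiff]
  omega
end
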